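/- Suppose r ≥ 2, the least common multiple b = lcm(f_1, f_2) has degree d+1, and b is the only square-free monomial of degree d+1 that lies in (f_1, f_2) \ J. Then depth_S (I/J) = d. -/

import Mathlib

open MvPolynomial

/-- The square-free monomial `∏ i ∈ T, X i` associated to a set `T` of variables. -/
noncomputable def sqMon (K : Type) [Field K] {n : ℕ} (T : Finset (Fin n)) :
    MvPolynomial (Fin n) K :=
  ∏ i ∈ T, X i

/-- `GenBySqMonOfDeg K P I` means: `I` is generated by square-free monomials whose
degrees satisfy the predicate `P`. -/
def GenBySqMonOfDeg (K : Type) [Field K] {n : ℕ} (P : ℕ → Prop)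
    (I : Ideal (MvPolynomial (Fin n) K)) : Prop :=
  ∃ G : Set (Finset (Fin n)), (∀ T ∈ G, P T.card) ∧ I = Ideal.span (sqMon K '' G)

/-- `rho K d I` : the number of square-free monomials of degree `d` belonging to `I`. -/
noncomputable def rho (K : Type) [Field K] {n : ℕ} (d : ℕ)
    (I : Ideal (MvPolynomial (Fin n) K)) : ℕ :=
  Set.ncard {T : Finset (Fin n) | T.card = d ∧ sqMon K T ∈ I}

/-- The maximal graded ideal `(x_1, …, x_n)` of `K[x_1, …, x_n]`. -/
noncomputable def maxGraded (K : Type) [Field K] (n : ℕ) :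
    Ideal (MvPolynomial (Fin n) K) :=
  Ideal.span (Set.range (X : Fin n → MvPolynomial (Fin n) K))

/-- The depth of the module `M` with respect to the ideal `I` : the supremum of the
lengths of `M`-regular sequences consisting of elements of `I`. -/
noncomputable def moduleDepth {R : Type} [CommRing R] (I : Ideal R)
    (M : Type) [AddCommGroup M] [Module R M] : ℕ∞ :=
  sSup {k : ℕ∞ | ∃ rs : List R, k = (rs.length : ℕ∞) ∧ (∀ r ∈ rs, r ∈ I) ∧
    RingTheory.Sequence.IsRegular M rs}

/-- The `R`-module `I/J` (more precisely `I/(I ∩ J)`, which is `I/J` when `J ≤ I`). -/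
noncomputable abbrev idealQuot {R : Type} [CommRing R] (I J : Ideal R) : Type :=
  ↥I ⧸ (Submodule.comap I.subtype (J : Submodule R R))

/-!
A square-free monomial quotient `I/J` has as basis the monomials whose support lies in an
order-convex family `S` of sets of variables. Removing maximal members of `S` one at a time filters
it by copies of `K[x_T]`, `T ∈ S`, of depth `|T|`, so that `depth I/J ≥ d`.

Let `c` and `b` be the gcd and the lcm of `f₁` and `f₂`. By uniqueness of `b`, the half-open
interval `]c, b]` is closed upwards in `S`, so it spans a submodule of `I/J` whose quotient has
depth at least `d`. It also spans a submodule of `c K[x_b]`, of depth `d + 1`, with quotient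
`c K[x_c]`, of depth `d - 1`. If the depth of `I/J` were greater than `d`, then so would be that of
the module of `]c, b]`, and hence `c K[x_c]` would have depth at least `d`.

Depth is controlled by Rees' criterion, the vanishing of `Ext^i(K, -)` for small `i`.
-/

open CategoryTheory CategoryTheory.Abelian

universe w v u

/-- `Ext^i(X, Y) = 0` for all `i < d`. For `X = R/𝔪` this is the homological form of
`depth Y ≥ d`, with the zero object having infinite depth. -/
def ExtVanishesBelow {C : Type u} [Category.{v} C] [Abelian C] [HasExt.{w} C]
    (X Y : C) (d : ℕ) : Prop :=
  ∀ i < d, Subsingleton (Ext X Y i)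

namespace ExtVanishesBelow

variable {C : Type u} [Category.{v} C] [Abelian C] [HasExt.{w} C] {X Y Z : C} {d e : ℕ}

theorem mono (h : ExtVanishesBelow X Y d) (hed : e ≤ d) : ExtVanishesBelow X Y e :=
  fun i hi => h i (hi.trans_le hed)

theorem of_isZero (hY : Limits.IsZero Y) : ExtVanishesBelow X Y d :=
  fun i _ => AddCommGrpCat.subsingleton_of_isZero ((extFunctorObj X i).map_isZero hY)

theorem iff_of_iso (e : Y ≅ Z) : ExtVanishesBelow X Y d ↔ ExtVanishesBelow X Z d :=
  forall₂_congr fun i _ =>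
    ((extFunctorObj X i).mapIso e).addCommGroupIsoToAddEquiv.toEquiv.subsingleton_congr

theorem self_iff (hX : ¬ Limits.IsZero X) : ExtVanishesBelow X X d ↔ d = 0 := by
  refine ⟨fun h => ?_, by rintro rfl i hi; exact absurd hi i.not_lt_zero⟩
  by_contra hd
  have := h 0 (Nat.pos_of_ne_zero hd)
  exact hX ((Limits.IsZero.iff_id_eq_zero X).mpr
    ((Ext.mk₀_eq_zero_iff _).mp (Subsingleton.elim _ _)))

variable {S : ShortComplex C}

theorem middle (hS : S.ShortExact) (h₁ : ExtVanishesBelow X S.X₁ d)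
    (h₃ : ExtVanishesBelow X S.X₃ d) : ExtVanishesBelow X S.X₂ d := by
  refine fun i hi => subsingleton_of_forall_eq 0 fun x => ?_
  have := h₁ i hi
  have := h₃ i hi
  obtain ⟨y, rfl⟩ := Ext.covariant_sequence_exact₂ X hS x (Subsingleton.elim _ _)
  rw [Subsingleton.elim y 0, Ext.zero_comp]

theorem left (hS : S.ShortExact) (h₂ : ExtVanishesBelow X S.X₂ (d + 1))
    (h₃ : ExtVanishesBelow X S.X₃ d) : ExtVanishesBelow X S.X₁ (d + 1) := by
  refine fun i hi => subsingleton_of_forall_eq 0 fun x => ?_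
  have := h₂ i hi
  obtain _ | j := i
  · have := hS.mono_f
    exact Ext.postcomp_mk₀_injective_of_mono X S.f (Subsingleton.elim _ _)
  · have := h₃ j (by lia)
    obtain ⟨y, rfl⟩ := Ext.covariant_sequence_exact₁ X hS x (Subsingleton.elim _ _) rfl
    rw [Subsingleton.elim y 0, Ext.zero_comp]

theorem right (hS : S.ShortExact) (h₂ : ExtVanishesBelow X S.X₂ d)
    (h₁ : ExtVanishesBelow X S.X₁ (d + 1)) : ExtVanishesBelow X S.X₃ d := by
  refine fun i hi => subsingleton_of_forall_eq 0 fun x => ?_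
  have := h₂ i hi
  have := h₁ (i + 1) (by lia)
  obtain ⟨y, rfl⟩ := Ext.covariant_sequence_exact₃ X hS x rfl (Subsingleton.elim _ _)
  rw [Subsingleton.elim y 0, Ext.zero_comp]

/-- If `r` kills `N`, multiplication by `r` induces zero on `Ext(N, M)`, so the long exact sequence
of `0 → M → M → M/rM → 0` breaks up into short ones. -/
theorem succ_iff_quotSMulTop {R : Type u} [CommRing R] [Small.{v} R] {N M : ModuleCat.{v} R}
    {r : R} (hr : r ∈ Module.annihilator R N) (hM : IsSMulRegular M r) :
    ExtVanishesBelow N M (d + 1) ↔ ExtVanishesBelow N (ModuleCat.of R (QuotSMulTop r M)) d := by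
  have hS := hM.smulShortComplex_shortExact
  refine ⟨fun h => right hS (h.mono d.le_succ) h, fun h i hi => ?_⟩
  have comp_smul_eq_zero (x : Ext N M i) :
      x.comp (Ext.mk₀ (M.smulShortComplex r).f) (add_zero i) = 0 :=
    congr($(Ext.postcomp_smul_id_eq_zero_of_mem_annihilator hr i) x)
  refine subsingleton_of_forall_eq 0 fun x => ?_
  obtain _ | j := i
  · have := hS.mono_f
    refine Ext.postcomp_mk₀_injective_of_mono N (M.smulShortComplex r).f ?_
    exact (comp_smul_eq_zero x).trans (Ext.zero_comp (h := add_zero 0) ..).symm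
  · have : Subsingleton (Ext N (M.smulShortComplex r).X₃ j) := h j (by lia)
    obtain ⟨y, rfl⟩ := Ext.covariant_sequence_exact₁ N hS x (comp_smul_eq_zero x) rfl
    rw [Subsingleton.elim y 0]
    exact Ext.zero_comp ..

end ExtVanishesBelow

theorem le_moduleDepth_iff {R : Type} [CommRing R] [IsNoetherianRing R] {I : Ideal R} {M : Type}
    [AddCommGroup M] [Module R M] [Module.Finite R M]
    (hIM : I • (⊤ : Submodule R M) ≠ ⊤) {d : ℕ} :
    (d : ℕ∞) ≤ moduleDepth I M ↔
      ExtVanishesBelow (ModuleCat.of R (R ⧸ I)) (ModuleCat.of R M) d := by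
  have hsupp : Module.support R (R ⧸ I) = PrimeSpectrum.zeroLocus I := by
    rw [Module.support_eq_zeroLocus, Ideal.annihilator_quotient]
  refine ⟨fun h => ?_, fun h => ?_⟩
  · obtain _ | e := d
    · exact fun i hi => absurd hi i.not_lt_zero
    have he : (e : ℕ∞) < moduleDepth I M :=
      (ENat.add_one_le_iff (ENat.natCast_ne_top e)).mp (by exact_mod_cast h)
    obtain ⟨_, ⟨rs, rfl, hmem, hreg⟩, hlt⟩ := lt_sSup_iff.mp he
    exact .mono (ModuleCat.subsingleton_ext_of_exists_isRegular I (.of R (R ⧸ I)) hsupp.le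
      (.of R M) hIM.lt_top rs hmem hreg) (by exact_mod_cast hlt)
  · obtain ⟨rs, hlen, hmem, hreg⟩ := ModuleCat.exists_isRegular_of_exists_subsingleton_ext I d
      (.of R M) hIM.lt_top (.of R (R ⧸ I)) hsupp h
    exact le_sSup ⟨rs, by rw [hlen], hmem, hreg⟩

theorem moduleDepth_eq_iff {R : Type} [CommRing R] [IsNoetherianRing R] {I : Ideal R} {M : Type}
    [AddCommGroup M] [Module R M] [Module.Finite R M]
    (hIM : I • (⊤ : Submodule R M) ≠ ⊤) {d : ℕ} :
    moduleDepth I M = d ↔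
      ExtVanishesBelow (ModuleCat.of R (R ⧸ I)) (ModuleCat.of R M) d ∧
        ¬ ExtVanishesBelow (ModuleCat.of R (R ⧸ I)) (ModuleCat.of R M) (d + 1) := by
  rw [← le_moduleDepth_iff hIM, ← le_moduleDepth_iff hIM, not_le, Nat.cast_add_one,
    ENat.lt_add_one_iff (ENat.natCast_ne_top d), and_comm, le_antisymm_iff]

section QuotientByVariables

open scoped Pointwise

/-- The ideal of `R[x_i : i ∈ σ]` generated by the variables `x_i` with `i ∈ s`. -/
noncomputable abbrev variableIdeal {σ : Type u} (R : Type v) [CommRing R] (s : Set σ) :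
    Ideal (MvPolynomial σ R) :=
  Ideal.span (X '' s)

variable {σ : Type u} {R : Type v} [CommRing R] {s : Set σ} {t : σ}

theorem isSMulRegular_X_quotient_variableIdeal (ht : t ∉ s) :
    IsSMulRegular (MvPolynomial σ R ⧸ variableIdeal R s) (X t : MvPolynomial σ R) := by
  rw [isSMulRegular_quotient_iff_mem_of_smul_mem]
  intro p hp
  rw [smul_eq_mul, mem_ideal_span_X_image, support_X_mul] at hp
  rw [mem_ideal_span_X_image]
  intro m hm
  obtain ⟨i, his, hi⟩ := hp _ (Finset.mem_map_of_mem _ hm)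
  have hti : t ≠ i := by rintro rfl; exact ht his
  exact ⟨i, his, by simpa [hti] using hi⟩

/-- Killing the variables in `s` and then `x_t` is the same as killing those in `insert t s`. -/
noncomputable def quotSMulTopXEquiv (s : Set σ) (t : σ) :
    QuotSMulTop (X t : MvPolynomial σ R) (MvPolynomial σ R ⧸ variableIdeal R s)
      ≃ₗ[MvPolynomial σ R] MvPolynomial σ R ⧸ variableIdeal R (insert t s) :=
  have map_span : (X t : MvPolynomial σ R) • (⊤ : Submodule _ (_ ⧸ variableIdeal R s)) =
      Submodule.map (Submodule.mkQ (variableIdeal R s)) (Ideal.span {X t}) := by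
    rw [← Submodule.ideal_span_singleton_smul, ← Submodule.range_mkQ, ← Submodule.map_top,
      ← Submodule.map_smul'', smul_eq_mul, Ideal.mul_top]
  have sup_span : variableIdeal R s ⊔ Ideal.span {X t} = variableIdeal R (insert t s) := by
    rw [variableIdeal, variableIdeal, Set.image_insert_eq, Ideal.span_insert, sup_comm]
  Submodule.quotEquivOfEq _ _ map_span ≪≫ₗ
    Submodule.quotientQuotientEquivQuotientSup (variableIdeal R s) (Ideal.span {X t}) ≪≫ₗ
    Submodule.quotEquivOfEq _ _ sup_span

theorem extVanishesBelow_quotient_variableIdeal_iff [Nontrivial R] {B : Finset σ} {d : ℕ} :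
    ExtVanishesBelow (ModuleCat.of (MvPolynomial σ R) (MvPolynomial σ R ⧸ idealOfVars σ R))
      (ModuleCat.of (MvPolynomial σ R) (MvPolynomial σ R ⧸ variableIdeal R (B : Set σ)ᶜ)) d ↔
        d ≤ B.card := by
  classical
  induction B using Finset.induction generalizing d with
  | empty =>
    rw [Finset.coe_empty, Set.compl_empty, variableIdeal, Set.image_univ, Finset.card_empty,
      Nat.le_zero]
    refine ExtVanishesBelow.self_iff fun h => ?_
    rw [ModuleCat.isZero_iff_subsingleton, Ideal.Quotient.subsingleton_iff,
      Ideal.eq_top_iff_one, idealOfVars, ← Set.image_univ, mem_ideal_span_X_image] at h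
    simpa using h 0
  | insert t B ht ih =>
    have hreg : IsSMulRegular (MvPolynomial σ R ⧸ variableIdeal R (↑(insert t B) : Set σ)ᶜ)
        (X t : MvPolynomial σ R) := isSMulRegular_X_quotient_variableIdeal (by simp)
    have hann : (X t : MvPolynomial σ R) ∈
        Module.annihilator (MvPolynomial σ R) (MvPolynomial σ R ⧸ idealOfVars σ R) := by
      rw [Ideal.annihilator_quotient]
      exact Ideal.subset_span ⟨t, rfl⟩
    have hcompl : insert t (↑(insert t B) : Set σ)ᶜ = (↑B)ᶜ := by
      ext i
      by_cases hi : i = t <;> simp [hi, ht]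
    have e := (quotSMulTopXEquiv (R := R) (↑(insert t B) : Set σ)ᶜ t).toModuleIso
    rw [hcompl] at e
    rw [Finset.card_insert_of_notMem ht]
    cases d with
    | zero => exact iff_of_true (fun i hi => absurd hi i.not_lt_zero) (Nat.zero_le _)
    | succ d =>
      rw [ExtVanishesBelow.succ_iff_quotSMulTop hann hreg, ExtVanishesBelow.iff_of_iso e, ih,
        Nat.succ_le_succ_iff]

end QuotientByVariables

section IdealQuotients

variable {R : Type} [CommRing R] {I I' J J' Q : Ideal R}

/-- The map `I/J → I'/J'` induced by inclusions `I ≤ I'` and `J ≤ J'`. -/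
noncomputable def idealQuotMap (hI : I ≤ I') (hJ : J ≤ J') : idealQuot I J →ₗ[R] idealQuot I' J' :=
  Submodule.mapQ _ _ (Submodule.inclusion hI) fun _ hx => hJ hx

theorem idealQuotMap_injective (hI : I ≤ I') (hJ : J ≤ J') (h : I ⊓ J' ≤ J) :
    Function.Injective (idealQuotMap hI hJ) := by
  rw [← LinearMap.ker_eq_bot, idealQuotMap, Submodule.mapQ, Submodule.ker_liftQ_eq_bot]
  intro x hx
  exact h ⟨x.2, by simpa using hx⟩

theorem idealQuotMap_surjective (hI : I ≤ I') (hJ : J ≤ J') (h : I' ≤ I ⊔ J') :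
    Function.Surjective (idealQuotMap hI hJ) := by
  intro y
  obtain ⟨⟨y, hy⟩, rfl⟩ := Submodule.mkQ_surjective _ y
  obtain ⟨x, hx, z, hz, rfl⟩ := Submodule.mem_sup.mp (h hy)
  refine ⟨Submodule.Quotient.mk ⟨x, hx⟩, ?_⟩
  rw [idealQuotMap, Submodule.mapQ_apply, Submodule.mkQ_apply, Submodule.Quotient.eq]
  simpa using hz

theorem idealQuotMap_exact (hJQ : J ≤ Q) (hQI : Q ≤ I) :
    Function.Exact (idealQuotMap hQI le_rfl : idealQuot Q J →ₗ[R] idealQuot I J)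
      (idealQuotMap le_rfl hJQ : idealQuot I J →ₗ[R] idealQuot I Q) := by
  rw [LinearMap.exact_iff, idealQuotMap, idealQuotMap, Submodule.ker_mapQ, Submodule.range_mapQ,
    Submodule.range_inclusion]
  rfl

/-- The cyclic module `I/J` generated by the class of `x` is `R/(J : x)`. -/
noncomputable def idealQuotSpanSingletonEquiv (x : R) (J : Ideal R) :
    idealQuot (Ideal.span {x}) J ≃ₗ[R] R ⧸ J.colon {x} :=
  let generator : idealQuot (Ideal.span {x}) J :=
    Submodule.Quotient.mk ⟨x, Ideal.mem_span_singleton_self x⟩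
  have ker_eq : J.colon {x} = LinearMap.ker (LinearMap.toSpanSingleton R _ generator) := by
    ext a
    simp [generator, ← Submodule.Quotient.mk_smul, Submodule.mem_colon_singleton]
  have surjective : Function.Surjective (LinearMap.toSpanSingleton R _ generator) := by
    intro y
    obtain ⟨⟨y, hy⟩, rfl⟩ := Submodule.mkQ_surjective _ y
    obtain ⟨a, rfl⟩ := Ideal.mem_span_singleton'.mp hy
    exact ⟨a, rfl⟩
  (Submodule.quotEquivOfEq _ _ ker_eq ≪≫ₗ
    LinearMap.quotKerEquivOfSurjective _ surjective).symm

end IdealQuotients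

section SquareFreeIdeals

variable {n : ℕ} {K : Type} [Field K] {T : Finset (Fin n)} {U V : Set (Finset (Fin n))}
  {p : MvPolynomial (Fin n) K}

/-- The exponent vector of the square-free monomial `x_T`. -/
noncomputable abbrev sqExponent (T : Finset (Fin n)) : Fin n →₀ ℕ :=
  Finsupp.indicator T fun _ _ => 1

theorem sqMon_eq_monomial : sqMon K T = monomial (sqExponent T) 1 := by
  rw [sqMon, sqExponent, Finsupp.indicator_eq_sum_single, monomial_sum_one]
  rfl

theorem sqExponent_le_iff {m : Fin n →₀ ℕ} : sqExponent T ≤ m ↔ T ⊆ m.support := by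
  refine forall_congr' fun i => ?_
  by_cases hi : i ∈ T <;> simp [Finsupp.indicator_apply, hi, Nat.one_le_iff_ne_zero]

theorem support_sqExponent_add (m : Fin n →₀ ℕ) :
    (sqExponent T + m).support = T ∪ m.support := by
  ext i
  by_cases hi : i ∈ T <;> simp [Finsupp.indicator_apply, hi]

variable (K) in
/-- The ideal generated by the square-free monomials `x_T` with `T ∈ V`. -/
noncomputable def sqIdeal (V : Set (Finset (Fin n))) : Ideal (MvPolynomial (Fin n) K) :=
  Ideal.span (sqMon K '' V)

theorem sqIdeal_mono (h : V ⊆ U) : sqIdeal K V ≤ sqIdeal K U :=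
  Ideal.span_mono (Set.image_mono h)

theorem sqIdeal_union : sqIdeal K (V ∪ U) = sqIdeal K V ⊔ sqIdeal K U := by
  rw [sqIdeal, Set.image_union, Ideal.span_union, sqIdeal, sqIdeal]

theorem mem_sqIdeal_iff_exists : p ∈ sqIdeal K V ↔ ∀ m ∈ p.support, ∃ T ∈ V, T ⊆ m.support := by
  have image_eq : sqMon K '' V = (monomial · 1) '' (sqExponent '' V) := by
    rw [Set.image_image]
    exact Set.image_congr fun T _ => sqMon_eq_monomial
  simp_rw [sqIdeal, image_eq, mem_ideal_span_monomial_image, Set.exists_mem_image,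
    sqExponent_le_iff]

theorem sqIdeal_upperClosure : sqIdeal K (upperClosure V : Set (Finset (Fin n))) = sqIdeal K V := by
  ext p
  simp_rw [mem_sqIdeal_iff_exists]
  refine forall₂_congr fun m _ => ⟨?_, ?_⟩
  · rintro ⟨A, ⟨T, hT, hTA⟩, hAm⟩
    exact ⟨T, hT, hTA.trans hAm⟩
  · rintro ⟨T, hT, hTm⟩
    exact ⟨T, subset_upperClosure hT, hTm⟩

theorem mem_sqIdeal_iff (hV : IsUpperSet V) : p ∈ sqIdeal K V ↔ ∀ m ∈ p.support, m.support ∈ V :=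
  mem_sqIdeal_iff_exists.trans <| forall₂_congr fun m _ =>
    ⟨fun ⟨_, hT, hTm⟩ => hV hTm hT, fun hm => ⟨m.support, hm, subset_rfl⟩⟩

theorem sqMon_mul_mem_sqIdeal_iff (hV : IsUpperSet V) :
    sqMon K T * p ∈ sqIdeal K V ↔ ∀ m ∈ p.support, T ∪ m.support ∈ V := by
  have support_eq : (sqMon K T * p).support = p.support.map (addLeftEmbedding (sqExponent T)) := by
    rw [sqMon_eq_monomial]
    exact AddMonoidAlgebra.support_coeff_single_mul p _ (by simp) _
  simp [mem_sqIdeal_iff hV, support_eq, support_sqExponent_add]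

theorem sqMon_mem_sqIdeal_iff (hV : IsUpperSet V) : sqMon K T ∈ sqIdeal K V ↔ T ∈ V := by
  classical
  rw [← mul_one (sqMon K T), sqMon_mul_mem_sqIdeal_iff hV]
  simp [support_one]

theorem sqIdeal_inf (hV : IsUpperSet V) (hU : IsUpperSet U) :
    sqIdeal K V ⊓ sqIdeal K U = sqIdeal K (V ∩ U) := by
  ext p
  rw [Ideal.mem_inf, mem_sqIdeal_iff hV, mem_sqIdeal_iff hU, mem_sqIdeal_iff (hV.inter hU),
    ← forall₂_and]
  rfl

theorem maxGraded_smul_top_ne_top {I : Ideal (MvPolynomial (Fin n) K)} (hU : IsUpperSet U)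
    (hTI : sqMon K T ∈ I) (hTU : T ∉ U) :
    maxGraded K n • (⊤ : Submodule (MvPolynomial (Fin n) K) (idealQuot I (sqIdeal K U))) ≠ ⊤ := by
  intro h
  obtain ⟨r, hr, hr_smul⟩ := Submodule.exists_sub_one_mem_and_smul_eq_zero_of_fg_of_le_smul _ _
    (Module.Finite.fg_top (R := MvPolynomial (Fin n) K)) h.ge
  have constantCoeff_r : constantCoeff r = 1 := by
    have maxGraded_le : maxGraded K n ≤ RingHom.ker constantCoeff :=
      Ideal.span_le.mpr <| Set.range_subset_iff.mpr fun i => constantCoeff_X K i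
    simpa [RingHom.mem_ker, sub_eq_zero] using maxGraded_le hr
  have mul_mem : sqMon K T * r ∈ sqIdeal K U := by
    have := hr_smul (Submodule.Quotient.mk ⟨sqMon K T, hTI⟩) trivial
    rw [← Submodule.Quotient.mk_smul, Submodule.Quotient.mk_eq_zero] at this
    simpa [mul_comm] using this
  have zero_mem : (0 : Fin n →₀ ℕ) ∈ r.support := by
    rw [mem_support_iff, ← constantCoeff_eq, constantCoeff_r]
    exact one_ne_zero
  exact hTU (by simpa using (sqMon_mul_mem_sqIdeal_iff hU).mp mul_mem 0 zero_mem)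

end SquareFreeIdeals

section SupportModules

open Set

theorem isUpperSet_upperClosure_diff {α : Type*} [Preorder α] {S : Set α} (hS : S.OrdConnected) :
    IsUpperSet (↑(upperClosure S) \ S) := by
  rintro A B hAB ⟨⟨A', hA', hA'A⟩, hA⟩
  exact ⟨⟨A', hA', hA'A.trans hAB⟩, fun hB => hA (hS.out hA' hB ⟨hA'A, hAB⟩)⟩

theorem ordConnected_diff_of_isRelUpperSet {α : Type*} [Preorder α] {S P : Set α}
    (hS : S.OrdConnected) (hP : IsRelUpperSet P (· ∈ S)) : (S \ P).OrdConnected :=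
  ⟨fun _ ha _ hc _ hb => ⟨hS.out ha.1 hc.1 hb, fun hbP => hc.2 ((hP hbP).2 hb.2 hc.1)⟩⟩

variable {n : ℕ} {K : Type} [Field K] {S P U V : Set (Finset (Fin n))} {T B : Finset (Fin n)}
  {d : ℕ}

variable (K) in
/-- For an order-convex family `S` of sets of variables, the multigraded module with `K`-basis the
monomials whose support lies in `S`, a variable acting by zero when it leads out of `S`. -/
abbrev SupportModule (S : Set (Finset (Fin n))) : Type :=
  idealQuot (sqIdeal K S) (sqIdeal K (↑(upperClosure S) \ S))

/-- A quotient of square-free monomial ideals depends only on the supports of its monomials. -/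
noncomputable def supportModuleDiffEquiv (hV : IsUpperSet V) (hU : IsUpperSet U) :
    SupportModule K (V \ U) ≃ₗ[MvPolynomial (Fin n) K] idealQuot (sqIdeal K V) (sqIdeal K U) :=
  have closure_diff_subset : ↑(upperClosure (V \ U)) \ (V \ U) ⊆ U := fun A hA => by
    by_contra hAU
    exact hA.2 ⟨upperClosure_min sdiff_subset hV hA.1, hAU⟩
  have inf_le : sqIdeal K (V \ U) ⊓ sqIdeal K U ≤
      sqIdeal K (↑(upperClosure (V \ U)) \ (V \ U)) := by
    rw [← sqIdeal_upperClosure, sqIdeal_inf (upperClosure _).upper hU]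
    exact sqIdeal_mono fun A hA => ⟨hA.1, fun h => h.2 hA.2⟩
  have le_sup : sqIdeal K V ≤ sqIdeal K (V \ U) ⊔ sqIdeal K U := by
    rw [← sqIdeal_union, sdiff_union_self]
    exact sqIdeal_mono subset_union_left
  LinearEquiv.ofBijective
    (idealQuotMap (sqIdeal_mono sdiff_subset) (sqIdeal_mono closure_diff_subset))
    ⟨idealQuotMap_injective _ _ inf_le, idealQuotMap_surjective _ _ le_sup⟩

theorem exists_shortExact_supportModule (hS : S.OrdConnected) (hP : IsRelUpperSet P (· ∈ S)) :
    ∃ (f : ModuleCat.of (MvPolynomial (Fin n) K) (SupportModule K P) ⟶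
        ModuleCat.of _ (SupportModule K S))
      (g : ModuleCat.of _ (SupportModule K S) ⟶ ModuleCat.of _ (SupportModule K (S \ P)))
      (w : f ≫ g = 0), (ShortComplex.mk f g w).ShortExact := by
  set V : Set (Finset (Fin n)) := ↑(upperClosure S)
  have hV : IsUpperSet V := (upperClosure S).upper
  have hPS : P ⊆ S := fun A hA => (hP hA).1
  have hSV : S ⊆ V := subset_upperClosure
  have hU : IsUpperSet (V \ S) := isUpperSet_upperClosure_diff hS
  have hQ : IsUpperSet (V \ S ∪ P) := by
    rintro A B hAB (hA | hA)
    · exact .inl (hU hAB hA)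
    · by_cases hB : B ∈ S
      · exact .inr ((hP hA).2 hAB hB)
      · exact .inl ⟨hV hAB (hSV (hPS hA)), hB⟩
  have hQV : V \ S ∪ P ⊆ V := union_subset sdiff_subset (hPS.trans hSV)
  have diff_P : (V \ S ∪ P) \ (V \ S) = P := by
    grind
  have diff_S : V \ (V \ S) = S := sdiff_sdiff_cancel_left hSV
  have diff_diff : V \ (V \ S ∪ P) = S \ P := by
    rw [← sdiff_sdiff, diff_S]
  have eP := supportModuleDiffEquiv (K := K) hQ hU
  have eS := supportModuleDiffEquiv (K := K) hV hU
  have eD := supportModuleDiffEquiv (K := K) hV hQ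
  rw [diff_P] at eP
  rw [diff_S] at eS
  rw [diff_diff] at eD
  exact ⟨_, _, _, ModuleCat.shortComplexOfConj_shortExact eP eS eD _ _
    (idealQuotMap_exact (sqIdeal_mono subset_union_left) (sqIdeal_mono hQV))
    (idealQuotMap_injective _ _ inf_le_right) (idealQuotMap_surjective _ _ le_sup_left)⟩

variable (K) in
/-- The module with support family `S` has depth at least `d` (in the `Ext` form). -/
abbrev SupportDepthGE (S : Set (Finset (Fin n))) (d : ℕ) : Prop :=
  ExtVanishesBelow (ModuleCat.of (MvPolynomial (Fin n) K) (MvPolynomial (Fin n) K ⧸ maxGraded K n))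
    (ModuleCat.of (MvPolynomial (Fin n) K) (SupportModule K S)) d

theorem colon_sqMon (hTB : T ⊆ B) :
    (sqIdeal K (Iic B)ᶜ).colon {sqMon K T} = variableIdeal K (B : Set (Fin n))ᶜ := by
  ext p
  rw [Submodule.mem_colon_singleton, smul_eq_mul, mul_comm,
    sqMon_mul_mem_sqIdeal_iff (isLowerSet_Iic B).compl, mem_ideal_span_X_image]
  refine forall₂_congr fun m _ => ?_
  simp [Finset.union_subset_iff, hTB, Finset.not_subset, and_comm]

theorem supportDepthGE_Icc_iff (hTB : T ⊆ B) : SupportDepthGE K (Icc T B) d ↔ d ≤ B.card := by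
  have sqIdeal_Ici : sqIdeal K (Ici T) = Ideal.span {sqMon K T} := by
    rw [← UpperSet.coe_Ici, ← upperClosure_singleton, sqIdeal_upperClosure, sqIdeal,
      image_singleton]
  have e := supportModuleDiffEquiv (K := K) (isUpperSet_Ici T) (isLowerSet_Iic B).compl
  rw [sdiff_compl, Ici_inter_Iic, sqIdeal_Ici] at e
  refine (ExtVanishesBelow.iff_of_iso (e ≪≫ₗ idealQuotSpanSingletonEquiv _ _ ≪≫ₗ
    Submodule.quotEquivOfEq _ _ (colon_sqMon hTB)).toModuleIso).trans ?_
  exact extVanishesBelow_quotient_variableIdeal_iff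

theorem supportDepthGE_of_le_card (hS : S.OrdConnected) (hd : ∀ A ∈ S, d ≤ A.card) :
    SupportDepthGE K S d := by
  induction S using WellFoundedLT.induction with
  | ind S ih =>
    obtain rfl | hne := S.eq_empty_or_nonempty
    · have sqIdeal_empty : sqIdeal K (∅ : Set (Finset (Fin n))) = ⊥ := by simp [sqIdeal]
      have : Subsingleton (SupportModule K (∅ : Set (Finset (Fin n)))) := by
        rw [SupportModule, sqIdeal_empty]
        infer_instance
      exact .of_isZero (ModuleCat.isZero_of_subsingleton _)
    · obtain ⟨T, hT⟩ := S.toFinite.exists_maximal hne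
      have hup : IsRelUpperSet {T} (· ∈ S) := by
        rintro _ rfl
        exact ⟨hT.prop, fun B hTB hB => (hT.eq_of_le hB hTB).symm⟩
      obtain ⟨f, g, w, hfg⟩ := exists_shortExact_supportModule (K := K) hS hup
      have depth_T : SupportDepthGE K {T} d := by
        rw [← Icc_self, supportDepthGE_Icc_iff subset_rfl]
        exact hd T hT.prop
      exact .middle hfg depth_T <| ih (S \ {T}) (sdiff_singleton_ssubset.mpr hT.prop)
        (ordConnected_diff_of_isRelUpperSet hS hup) fun A hA => hd A hA.1

theorem not_supportDepthGE_succ (hS : S.OrdConnected) (hd : ∀ A ∈ S, d ≤ A.card) (hTB : T ⊆ B)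
    (hT : T.card < d) (hB : d ≤ B.card)
    (hup : IsRelUpperSet (Ioc T B) (· ∈ S)) : ¬ SupportDepthGE K S (d + 1) := by
  intro hdepth
  obtain ⟨_, _, _, hS'⟩ := exists_shortExact_supportModule (K := K) hS hup
  have depth_Ioc : SupportDepthGE K (Ioc T B) (d + 1) :=
    .left hS' hdepth <| supportDepthGE_of_le_card (ordConnected_diff_of_isRelUpperSet hS hup)
      fun A hA => hd A hA.1
  have hIoc : IsRelUpperSet (Ioc T B) (· ∈ Icc T B) := fun A hA =>
    ⟨Ioc_subset_Icc_self hA, fun _ hAA' hA' => ⟨hA.1.trans_le hAA', hA'.2⟩⟩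
  obtain ⟨_, _, _, hIcc⟩ := exists_shortExact_supportModule (K := K) ordConnected_Icc hIoc
  have depth_diff : SupportDepthGE K (Icc T B \ Ioc T B) d :=
    .right hIcc ((supportDepthGE_Icc_iff hTB).mpr hB) depth_Ioc
  rw [Icc_sdiff_Ioc_same hTB, ← Icc_self, supportDepthGE_Icc_iff subset_rfl] at depth_diff
  exact hT.not_ge depth_diff

end SupportModules

section SquareFreeQuotientDepth

open Set

theorem subset_or_subset_of_mem_Ioc_inter_union {α : Type*} [DecidableEq α] {F₁ F₂ A : Finset α}
    (h₁ : (F₁ \ F₂).card = 1) (h₂ : (F₂ \ F₁).card = 1) (hA : A ∈ Ioc (F₁ ∩ F₂) (F₁ ∪ F₂)) :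
    F₁ ⊆ A ∨ F₂ ⊆ A := by
  have subset_of_mem {F G : Finset α} {z : α} (hFG : (F \ G).card = 1) (hGA : F ∩ G ⊆ A)
      (hzA : z ∈ A) (hz : z ∈ F \ G) : F ⊆ A := by
    intro i hi
    by_cases hiG : i ∈ G
    · exact hGA (Finset.mem_inter.mpr ⟨hi, hiG⟩)
    · exact Finset.card_le_one.mp hFG.le i (Finset.mem_sdiff.mpr ⟨hi, hiG⟩) z hz ▸ hzA
  obtain ⟨z, hzA, hz⟩ := Finset.exists_of_ssubset hA.1
  rcases Finset.mem_union.mp (hA.2 hzA) with hz₁ | hz₂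
  · exact .inl (subset_of_mem h₁ hA.1.subset hzA (by grind))
  · exact .inr (subset_of_mem h₂ (Finset.inter_comm F₁ F₂ ▸ hA.1.subset) hzA (by grind))

theorem subset_of_subset_of_notMem {α : Type*} [DecidableEq α] {U : Set (Finset α)}
    {F A B : Finset α} (hU : IsUpperSet U) (huniq : ∀ x ∉ F, insert x F ∉ U → insert x F = B)
    (hFB : F ⊆ B) (hFA : F ⊆ A) (hA : A ∉ U) : A ⊆ B := by
  intro x hx
  by_cases hxF : x ∈ F
  · exact hFB hxF
  · have insert_notMem : insert x F ∉ U := fun h => hA (hU (Finset.insert_subset hx hFA) h)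
    exact huniq x hxF insert_notMem ▸ Finset.mem_insert_self x F

variable {n : ℕ} {K : Type} [Field K] {U V : Set (Finset (Fin n))} {d : ℕ}

theorem moduleDepth_idealQuot_sqIdeal_eq_iff (hV : IsUpperSet V) (hU : IsUpperSet U)
    (hVU : (V \ U).Nonempty) :
    moduleDepth (maxGraded K n) (idealQuot (sqIdeal K V) (sqIdeal K U)) = d ↔
      SupportDepthGE K (V \ U) d ∧ ¬ SupportDepthGE K (V \ U) (d + 1) := by
  obtain ⟨T, hTV, hTU⟩ := hVU
  rw [moduleDepth_eq_iff (maxGraded_smul_top_ne_top hU ((sqMon_mem_sqIdeal_iff hV).mpr hTV) hTU)]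
  have e := (supportModuleDiffEquiv (K := K) hV hU).toModuleIso
  rw [SupportDepthGE, SupportDepthGE, ExtVanishesBelow.iff_of_iso e, ExtVanishesBelow.iff_of_iso e]

theorem moduleDepth_idealQuot_sqIdeal_eq {F₁ F₂ : Finset (Fin n)} (hV : IsUpperSet V)
    (hU : IsUpperSet U) (hd : ∀ A ∈ V, d ≤ A.card) (hF₁ : F₁ ∈ V) (hF₂ : F₂ ∈ V)
    (h₁ : F₁.card = d) (h₂ : F₂.card = d) (hb : (F₁ ∪ F₂).card = d + 1) (hbU : F₁ ∪ F₂ ∉ U)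
    (huniq : ∀ A, A.card = d + 1 → (F₁ ⊆ A ∨ F₂ ⊆ A) → A ∉ U → A = F₁ ∪ F₂) :
    moduleDepth (maxGraded K n) (idealQuot (sqIdeal K V) (sqIdeal K U)) = d := by
  have hS : (V \ U).OrdConnected := hV.ordConnected.inter hU.compl.ordConnected
  have hdS : ∀ A ∈ V \ U, d ≤ A.card := fun A hA => hd A hA.1
  have contains_generator {A} (hA : A ∈ Ioc (F₁ ∩ F₂) (F₁ ∪ F₂)) : F₁ ⊆ A ∨ F₂ ⊆ A :=
    subset_or_subset_of_mem_Ioc_inter_union (by grind) (by grind) hA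
  have subset_union {A} (hA : F₁ ⊆ A ∨ F₂ ⊆ A) (hAU : A ∉ U) : A ⊆ F₁ ∪ F₂ := by
    rcases hA with h | h
    · refine subset_of_subset_of_notMem hU (fun x hx => ?_) Finset.subset_union_left h hAU
      exact huniq _ (by rw [Finset.card_insert_of_notMem hx, h₁])
        (.inl (Finset.subset_insert x F₁))
    · refine subset_of_subset_of_notMem hU (fun x hx => ?_) Finset.subset_union_right h hAU
      exact huniq _ (by rw [Finset.card_insert_of_notMem hx, h₂])
        (.inr (Finset.subset_insert x F₂))
  have hup : IsRelUpperSet (Ioc (F₁ ∩ F₂) (F₁ ∪ F₂)) (· ∈ V \ U) := fun A hA =>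
    ⟨⟨(contains_generator hA).elim (hV · hF₁) (hV · hF₂), fun hAU => hbU (hU hA.2 hAU)⟩,
      fun A' hAA' hA' => ⟨hA.1.trans_le hAA', subset_union
        ((contains_generator hA).imp (·.trans hAA') (·.trans hAA')) hA'.2⟩⟩
  have card_inter_lt : (F₁ ∩ F₂).card < d := by
    have := Finset.card_union_add_card_inter F₁ F₂
    omega
  have union_mem : F₁ ∪ F₂ ∈ V \ U := ⟨hV Finset.subset_union_left hF₁, hbU⟩
  exact (moduleDepth_idealQuot_sqIdeal_eq_iff hV hU ⟨_, union_mem⟩).mpr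
    ⟨supportDepthGE_of_le_card hS hdS, not_supportDepthGE_succ hS hdS
      (Finset.inter_subset_left.trans Finset.subset_union_left) card_inter_lt (by omega) hup⟩

end SquareFreeQuotientDepth

theorem stmt_5_general {n : ℕ} {K : Type} [Field K] {d : ℕ}
    {I J : Ideal (MvPolynomial (Fin n) K)} (hI : GenBySqMonOfDeg K (d ≤ ·) I)
    (hJ : GenBySqMonOfDeg K (fun _ => True) J) {F₁ F₂ : Finset (Fin n)}
    (hF₁ : sqMon K F₁ ∈ I) (hF₂ : sqMon K F₂ ∈ I) (h₁ : F₁.card = d) (h₂ : F₂.card = d)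
    (hb : (F₁ ∪ F₂).card = d + 1) (hbJ : sqMon K (F₁ ∪ F₂) ∉ J)
    (huniq : ∀ T : Finset (Fin n), T.card = d + 1 →
      sqMon K T ∈ Ideal.span {sqMon K F₁, sqMon K F₂} → sqMon K T ∉ J → T = F₁ ∪ F₂) :
    moduleDepth (maxGraded K n) (idealQuot I J) = d := by
  obtain ⟨G, hGd, rfl⟩ := hI
  obtain ⟨H, -, rfl⟩ := hJ
  have mem_iff {G : Set (Finset (Fin n))} {T : Finset (Fin n)} :
      sqMon K T ∈ Ideal.span (sqMon K '' G) ↔ T ∈ upperClosure G := by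
    rw [← sqIdeal, ← sqIdeal_upperClosure]
    exact sqMon_mem_sqIdeal_iff (upperClosure G).upper
  rw [← Set.image_pair] at huniq
  simp only [mem_iff] at hF₁ hF₂ hbJ huniq
  rw [← sqIdeal, ← sqIdeal, ← sqIdeal_upperClosure, ← sqIdeal_upperClosure (V := H)]
  refine moduleDepth_idealQuot_sqIdeal_eq (upperClosure G).upper (upperClosure H).upper ?_
    hF₁ hF₂ h₁ h₂ hb hbJ fun A hA hF hAJ => huniq A hA (by simpa using hF) hAJ
  rintro A ⟨T, hT, hTA⟩
  exact (hGd T hT).trans (Finset.card_le_card hTA)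

/-- Lemma 1.8. -/
theorem stmt_5 (n : ℕ) (K : Type) [Field K] (d : ℕ) (hd : 0 < d)
    (I J : Ideal (MvPolynomial (Fin n) K)) (hJ0 : J ≠ ⊥) (hJI : J < I)
    (r : ℕ) (hr2 : 2 ≤ r) (f : Fin r → Finset (Fin n)) (hfinj : Function.Injective f)
    (hfd : ∀ i, (f i).card = d)
    (hIgen : I = Ideal.span (Set.range fun i => sqMon K (f i)))
    (hJgen : GenBySqMonOfDeg K (fun k => k = d + 1) J)
    (hbcard : (f ⟨0, by omega⟩ ∪ f ⟨1, by omega⟩).card = d + 1)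
    (hbJ : sqMon K (f ⟨0, by omega⟩ ∪ f ⟨1, by omega⟩) ∉ J)
    (huniq : ∀ T : Finset (Fin n), T.card = d + 1 →
      sqMon K T ∈ Ideal.span {sqMon K (f ⟨0, by omega⟩), sqMon K (f ⟨1, by omega⟩)} →
      sqMon K T ∉ J → T = f ⟨0, by omega⟩ ∪ f ⟨1, by omega⟩) :
    moduleDepth (maxGraded K n) (idealQuot I J) = (d : ℕ∞) := by
  have sqMon_mem (i) : sqMon K (f i) ∈ I := hIgen ▸ Ideal.subset_span ⟨i, rfl⟩
  have hI : GenBySqMonOfDeg K (d ≤ ·) I :=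
    ⟨Set.range f, Set.forall_mem_range.mpr fun i => (hfd i).ge,
      by rw [hIgen, ← Set.range_comp]; rfl⟩
  obtain ⟨G, -, hJG⟩ := hJgen
  exact stmt_5_general hI ⟨G, fun _ _ => trivial, hJG⟩ (sqMon_mem _) (sqMon_mem _) (hfd _) (hfd _)
    hbcard hbJ huniq
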